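/- arXiv:1605.04018 — 2 statements merged into one kernel-verified Lean document; each statement's English description precedes it below -/
import Mathlib

section
/- There exists η > 0 such that μ has a bounded continuous density p with respect to Lebesgue measure, given by p(x) = (1/2π) ∫_{−∞}^{∞} f(t) e^{−ixt} dt, and p extends to a function analytic on the horizontal strip {s ∈ ℂ : |Im s| < η} (namely s ↦ (1/2π) ∫_{−∞}^{∞} f(t) e^{−ist} dt, the integral being absolutely convergent there). -/
open MeasureTheory Set Filter Topology
open scoped FourierTransform ContDiff

noncomputable def qsPhase (c x : ℝ) : ℝ :=
  2 * x * Real.log x + 2 * (1 - x) * Real.log (1 - x) + c * x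

lemma qsPhase_continuous (c : ℝ) : Continuous (qsPhase c) := by
  have h1 : Continuous fun x : ℝ => x * Real.log x := Real.continuous_mul_log
  have h2 : Continuous fun x : ℝ => (1 - x) * Real.log (1 - x) :=
    h1.comp (continuous_const.sub continuous_id)
  have : qsPhase c = fun x => 2 * (x * Real.log x) + 2 * ((1 - x) * Real.log (1 - x)) + c * x := by
    funext x; simp only [qsPhase]; ring
  rw [this]; fun_prop

lemma qsPhase_deriv (c x : ℝ) (h0 : 0 < x) (h1 : x < 1) :
    HasDerivAt (qsPhase c) (2 * Real.log x - 2 * Real.log (1 - x) + c) x := by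
  have h1' : (1 - x) ≠ 0 := by linarith
  have e1 := (Real.hasDerivAt_mul_log h0.ne').const_mul 2
  have e2 := (((Real.hasDerivAt_mul_log h1').comp x ((hasDerivAt_id x).const_sub 1)).const_mul 2)
  have e3 := (hasDerivAt_id x).const_mul c
  have := (e1.add e2).add e3
  refine (this.congr_deriv ?_).congr_of_eventuallyEq ?_
  · ring
  · refine Eventually.of_forall fun y => ?_
    simp only [qsPhase, Pi.add_apply, Function.comp, id]; ring

lemma qsPhase_deriv2 (c x : ℝ) (h0 : 0 < x) (h1 : x < 1) :
    HasDerivAt (fun x => 2 * Real.log x - 2 * Real.log (1 - x) + c) (2 / x + 2 / (1 - x)) x := by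
  have h1' : (1 - x) ≠ 0 := by linarith
  have e1 := (Real.hasDerivAt_log h0.ne').const_mul 2
  have e2 := (((Real.hasDerivAt_log h1').comp x ((hasDerivAt_id x).const_sub 1)).const_mul 2)
  have := (e1.sub e2).add_const c
  refine (this.congr_deriv ?_).congr_of_eventuallyEq ?_
  · field_simp; ring
  · refine Eventually.of_forall fun y => ?_
    simp [Function.comp]

lemma qs_alg (t u w : ℝ) (ht : 0 < t) (hw : 8 ≤ w) :
    ‖(((1 / (1 + t * u^2) : ℝ) : ℂ) +
      Complex.I * (((1 - t * u^2) / (1 + t * u^2)^2 * w : ℝ) : ℂ))‖ ≤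
      9 / 8 * (w / (1 + t * u^2)) := by
  have hd : 0 < 1 + t * u^2 := by positivity
  have h1 : |1 - t * u^2| ≤ 1 + t * u^2 := by
    have : 0 ≤ t * u^2 := by positivity
    rw [abs_le]; constructor <;> linarith
  refine (norm_add_le _ _).trans ?_
  rw [norm_mul, Complex.norm_I, one_mul, Complex.norm_real, Complex.norm_real,
    Real.norm_eq_abs, Real.norm_eq_abs, abs_mul, abs_div, abs_div, abs_one, abs_of_pos hd,
    abs_of_pos (by linarith : 0 < w), abs_of_pos (pow_pos hd 2)]
  have h2 : |1 - t * u^2| / (1 + t * u^2)^2 ≤ 1 / (1 + t*u^2) := by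
    rw [div_le_div_iff₀ (by positivity) hd]
    nlinarith
  have h3 : |1 - t * u^2| / (1 + t * u^2)^2 * w ≤ 1 / (1 + t*u^2) * w :=
    mul_le_mul_of_nonneg_right h2 (by linarith)
  have h4 : 1 / (1 + t*u^2) ≤ w / 8 / (1 + t*u^2) := by
    apply div_le_div_of_nonneg_right _ hd.le; linarith
  calc _ ≤ w / 8 / (1 + t*u^2) + 1 / (1 + t*u^2) * w := add_le_add h4 h3
    _ = _ := by field_simp; ring

lemma qs_G (t u : ℝ) (ht : 0 < t) : |u / (1 + t * u^2)| ≤ 1 / (2 * √t) := by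
  have hd : 0 < 1 + t * u^2 := by positivity
  have hs : 0 < √t := Real.sqrt_pos.2 ht
  have hst : √t ^ 2 = t := Real.sq_sqrt ht.le
  rw [abs_div, abs_of_pos hd, div_le_div_iff₀ hd (by positivity)]
  have : |u|^2 = u^2 := sq_abs u
  nlinarith [sq_nonneg (√t * |u| - 1)]

lemma qs_osc_ab (c t a b : ℝ) (ht : 0 < t) (ha : 0 < a) (hab : a ≤ b) (hb : b < 1) :
    ‖∫ x in a..b, Complex.exp (Complex.I * t * (qsPhase c x : ℝ))‖ ≤ 5 / √t := by
  have hs : 0 < √t := Real.sqrt_pos.2 ht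
  have hst : √t ^ 2 = t := Real.sq_sqrt ht.le
  set E : ℝ → ℂ := fun x => Complex.exp (Complex.I * t * (qsPhase c x : ℝ)) with hE
  have hEc : Continuous E := by
    have := qsPhase_continuous c
    simp only [hE]; fun_prop
  have hEn : ∀ x, ‖E x‖ = 1 := by
    intro x
    have : E x = Complex.exp ((t * qsPhase c x : ℝ) * Complex.I) := by
      simp only [hE]; congr 1; push_cast; ring
    rw [this, Complex.norm_exp_ofReal_mul_I]
  set u : ℝ → ℝ := fun x => 2 * Real.log x - 2 * Real.log (1 - x) + c with hu
  set w : ℝ → ℝ := fun x => 2 / x + 2 / (1 - x) with hw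
  set Φ : ℝ → ℂ := fun x => -Complex.I * ((u x / (1 + t * (u x)^2) : ℝ) : ℂ) * E x with hΦ
  have hΦn : ∀ x, ‖Φ x‖ ≤ 1 / (2 * √t) := by
    intro x
    simp only [hΦ, norm_mul, norm_neg, Complex.norm_I, hEn, one_mul, mul_one, Complex.norm_real,
      Real.norm_eq_abs]
    exact qs_G t (u x) ht
  set F : ℝ → ℂ := fun x => (∫ y in a..x, E y) - Φ x with hF
  set B : ℝ → ℝ := fun x => 1 / (2 * √t) +
    9 / 8 / √t * (Real.arctan (√t * u x) - Real.arctan (√t * u a)) with hB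
  have hFd : ∀ x ∈ Icc a b, HasDerivAt F
      ((((1 / (1 + t * (u x)^2) : ℝ) : ℂ) +
      Complex.I * (((1 - t * (u x)^2) / (1 + t * (u x)^2)^2 * w x : ℝ) : ℂ)) * E x) x := by
    intro x hx
    have h0 : 0 < x := by linarith [hx.1]
    have h1 : x < 1 := by linarith [hx.2]
    have hd : 0 < 1 + t * (u x)^2 := by positivity
    have du : HasDerivAt u (w x) x := qsPhase_deriv2 c x h0 h1
    have dp : HasDerivAt (qsPhase c) (u x) x := qsPhase_deriv c x h0 h1
    have dE : HasDerivAt E (E x * (Complex.I * t * (u x : ℝ))) x :=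
      ((dp.ofReal_comp).const_mul (Complex.I * t)).cexp
    have dG : HasDerivAt (fun x => u x / (1 + t * (u x)^2))
        ((1 - t * (u x)^2) / (1 + t * (u x)^2)^2 * w x) x := by
      have := du.div (((du.pow 2).const_mul t).const_add 1) hd.ne'
      refine this.congr_deriv ?_
      simp only [Pi.pow_apply]
      field_simp
      ring
    have dΦ := ((dG.ofReal_comp).const_mul (-Complex.I)).mul dE
    have dI : HasDerivAt (fun x => ∫ y in a..x, E y) (E x) x :=
      intervalIntegral.integral_hasDerivAt_right (hEc.intervalIntegrable _ _)
        (hEc.stronglyMeasurableAtFilter _ _) hEc.continuousAt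
    refine (dI.sub dΦ).congr_deriv ?_
    have hd' : (1 + (t:ℂ) * (u x : ℂ)^2) ≠ 0 := by exact_mod_cast hd.ne'
    push_cast
    field_simp
    ring_nf
    simp only [Complex.I_sq]
    ring
  have hBd : ∀ x ∈ Icc a b, HasDerivAt B (9 / 8 * (w x / (1 + t * (u x)^2))) x := by
    intro x hx
    have h0 : 0 < x := by linarith [hx.1]
    have h1 : x < 1 := by linarith [hx.2]
    have hd : 0 < 1 + t * (u x)^2 := by positivity
    have du : HasDerivAt u (w x) x := qsPhase_deriv2 c x h0 h1
    have := ((((du.const_mul (√t)).arctan).sub_const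
      (Real.arctan (√t * u a))).const_mul (9/8/√t)).const_add (1 / (2 * √t))
    refine this.congr_deriv ?_
    rw [mul_pow, hst]
    field_simp
  have key := image_norm_le_of_norm_deriv_right_le_deriv_boundary'
    (f := F) (B := B) (a := a) (b := b)
    (fun x hx => (hFd x hx).continuousAt.continuousWithinAt)
    (fun x hx => (hFd x (Ico_subset_Icc_self hx)).hasDerivWithinAt)
    (by simpa [hF, hB] using hΦn a)
    (fun x hx => (hBd x hx).continuousAt.continuousWithinAt)
    (fun x hx => (hBd x (Ico_subset_Icc_self hx)).hasDerivWithinAt)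
    (by
      intro x hx
      have h0 : 0 < x := by linarith [hx.1]
      have h1 : 0 < 1 - x := by linarith [hx.2]
      rw [norm_mul, hEn, mul_one]
      apply qs_alg _ _ _ ht
      simp only [hw]
      rw [div_add_div _ _ h0.ne' h1.ne', le_div_iff₀ (by positivity)]
      nlinarith [sq_nonneg (2 * x - 1)])
    (right_mem_Icc.2 hab)
  have h1 : (∫ y in a..b, E y) = F b + Φ b := by simp [hF]
  rw [h1]
  refine (norm_add_le _ _).trans ((add_le_add key (hΦn b)).trans ?_)
  have hpi := Real.pi_lt_d2
  have a1 := Real.arctan_lt_pi_div_two (√t * u b)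
  have a2 := Real.neg_pi_div_two_lt_arctan (√t * u a)
  have : 9 / 8 / √t * (Real.arctan (√t * u b) - Real.arctan (√t * u a)) ≤ 9/8/√t * 3.15 := by
    gcongr; linarith
  calc _ ≤ 1 / (2 * √t) + 9/8/√t * 3.15 + 1 / (2 * √t) := by simp only [hB]; linarith
    _ = (1 + 9/8*3.15) / √t := by field_simp; ring
    _ ≤ _ := by gcongr; norm_num

lemma qs_osc (c t : ℝ) (ht : 0 < t) :
    ‖∫ x in (0:ℝ)..1, Complex.exp (Complex.I * t * (qsPhase c x : ℝ))‖ ≤ 5 / √t := by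
  have hEc : Continuous fun x : ℝ => Complex.exp (Complex.I * t * (qsPhase c x : ℝ)) := by
    have := qsPhase_continuous c
    fun_prop
  have hcont : Continuous fun e : ℝ =>
      ‖∫ x in e..(1-e), Complex.exp (Complex.I * t * (qsPhase c x : ℝ))‖ := by
    have : ∀ e : ℝ, ∫ x in e..(1-e), Complex.exp (Complex.I * t * (qsPhase c x : ℝ)) =
      (∫ x in (0:ℝ)..(1-e), Complex.exp (Complex.I * t * (qsPhase c x : ℝ))) -
      ∫ x in (0:ℝ)..e, Complex.exp (Complex.I * t * (qsPhase c x : ℝ)) := fun e =>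
      (intervalIntegral.integral_interval_sub_left (hEc.intervalIntegrable _ _)
        (hEc.intervalIntegrable _ _)).symm
    simp only [this]
    have hc : Continuous fun e : ℝ =>
        ∫ x in (0:ℝ)..e, Complex.exp (Complex.I * t * (qsPhase c x : ℝ)) :=
      intervalIntegral.continuous_primitive (fun a b => hEc.intervalIntegrable a b) 0
    exact ((hc.comp (continuous_const.sub continuous_id)).sub hc).norm
  have hlim := (hcont.tendsto 0).mono_left (nhdsWithin_le_nhds (s := Ioi 0))
  simp only [sub_zero] at hlim
  refine le_of_tendsto hlim ?_
  filter_upwards [Ioo_mem_nhdsGT (show (0:ℝ) < 1/2 by norm_num)] with e he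
  exact qs_osc_ab c t e (1-e) ht he.1 (by linarith [he.2]) (by linarith [he.1])

lemma qs_f_continuous (μ : Measure ℝ) [IsProbabilityMeasure μ] (f : ℝ → ℂ)
    (hf : ∀ t : ℝ, f t = ∫ x : ℝ, Complex.exp (Complex.I * t * x) ∂μ) : Continuous f := by
  have : f = fun t => charFun μ t := by
    funext t
    rw [hf, charFun_apply_real]
    congr 1; funext x; congr 1; ring
  rw [this]; exact continuous_charFun

lemma qs_f_norm_le_one (μ : Measure ℝ) [IsProbabilityMeasure μ] (f : ℝ → ℂ)
    (hf : ∀ t : ℝ, f t = ∫ x : ℝ, Complex.exp (Complex.I * t * x) ∂μ) (t : ℝ) : ‖f t‖ ≤ 1 := by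
  have : f t = charFun μ t := by
    rw [hf, charFun_apply_real]
    congr 1; funext x; congr 1; ring
  rw [this]; exact norm_charFun_le_one t

lemma qs_f_neg (μ : Measure ℝ) [IsProbabilityMeasure μ] (f : ℝ → ℂ)
    (hf : ∀ t : ℝ, f t = ∫ x : ℝ, Complex.exp (Complex.I * t * x) ∂μ) (t : ℝ) :
    f (-t) = (starRingEnd ℂ) (f t) := by
  have : ∀ t, f t = charFun μ t := by
    intro t
    rw [hf, charFun_apply_real]
    congr 1; funext x; congr 1; ring
  rw [this, this]; exact charFun_neg t

lemma qs_half (μ : Measure ℝ) [IsProbabilityMeasure μ] (f : ℝ → ℂ)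
    (hf : ∀ t : ℝ, f t = ∫ x : ℝ, Complex.exp (Complex.I * t * x) ∂μ)
    (hfix : ∀ t : ℝ, f t = Complex.exp (Complex.I * t) *
      ∫ x in (0:ℝ)..1, f (t * x) * f (t * (1 - x)) *
        Complex.exp (2 * Complex.I * t * x * Real.log x +
          2 * Complex.I * t * (1 - x) * Real.log (1 - x)))
    (t : ℝ) (ht : 0 < t) : ‖f t‖ ≤ 5 / √t := by
  set H : ℝ → ℝ × ℝ → ℂ := fun x q =>
    Complex.exp (Complex.I * t * (q.2 + qsPhase (q.1 - q.2) x : ℝ)) with hH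
  have hHc : Continuous (Function.uncurry H) := by
    have : Function.uncurry H = fun r : ℝ × (ℝ × ℝ) =>
        Complex.exp (Complex.I * t * (r.2.2 + (qsPhase 0 r.1 + (r.2.1 - r.2.2) * r.1) : ℝ)) := by
      funext r
      simp only [hH, Function.uncurry, qsPhase]
      congr 3; ring
    rw [this]
    have := qsPhase_continuous 0
    fun_prop
  have hHn : ∀ x q, ‖H x q‖ = 1 := by
    intro x q
    have : H x q = Complex.exp ((t * (q.2 + qsPhase (q.1 - q.2) x) : ℝ) * Complex.I) := by
      simp only [hH]; congr 1; push_cast; ring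
    rw [this, Complex.norm_exp_ofReal_mul_I]
  have h1 : ∀ x : ℝ, f (t * x) * f (t * (1 - x)) *
        Complex.exp (2 * Complex.I * t * x * Real.log x +
          2 * Complex.I * t * (1 - x) * Real.log (1 - x)) = ∫ q, H x q ∂(μ.prod μ) := by
    intro x
    rw [hf, hf, ← integral_prod_mul, ← integral_mul_const]
    congr 1
    funext q
    simp only [hH, qsPhase]
    rw [← Complex.exp_add, ← Complex.exp_add]
    congr 1
    push_cast
    ring
  rw [hfix t, norm_mul]
  have h2 : ‖Complex.exp (Complex.I * t)‖ = 1 := by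
    rw [mul_comm, Complex.norm_exp_ofReal_mul_I]
  rw [h2, one_mul]
  simp only [h1]
  rw [intervalIntegral.integral_of_le zero_le_one]
  rw [integral_integral_swap]
  · have : ∀ q : ℝ × ℝ, ‖∫ x in Ioc (0:ℝ) 1, H x q‖ ≤ 5 / √t := by
      intro q
      rw [← intervalIntegral.integral_of_le zero_le_one]
      have : ∀ x, H x q = Complex.exp (Complex.I * t * q.2) *
          Complex.exp (Complex.I * t * (qsPhase (q.1 - q.2) x : ℝ)) := by
        intro x
        simp only [hH]; rw [← Complex.exp_add]; congr 1; push_cast; ring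
      simp only [this]
      rw [intervalIntegral.integral_const_mul, norm_mul]
      have h3 : ‖Complex.exp (Complex.I * t * q.2)‖ = 1 := by
        rw [show Complex.I * t * q.2 = ((t * q.2 : ℝ) : ℂ) * Complex.I by push_cast; ring,
          Complex.norm_exp_ofReal_mul_I]
      rw [h3, one_mul]
      exact qs_osc _ t ht
    have := norm_integral_le_of_norm_le_const (μ := μ.prod μ) (Eventually.of_forall this)
    simpa using this
  · refine Integrable.of_bound hHc.aestronglyMeasurable 1 (Eventually.of_forall fun r => ?_)
    exact (hHn r.1 r.2).le

/-- Basic inequality from the fixed point equation. -/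
lemma qs_enorm_le (f : ℝ → ℂ)
    (hfix : ∀ t : ℝ, f t = Complex.exp (Complex.I * t) *
      ∫ x in (0:ℝ)..1, f (t * x) * f (t * (1 - x)) *
        Complex.exp (2 * Complex.I * t * x * Real.log x +
          2 * Complex.I * t * (1 - x) * Real.log (1 - x)))
    (t : ℝ) : ‖f t‖ₑ ≤ ∫⁻ x in Ioo (0:ℝ) 1, ‖f (t * x)‖ₑ * ‖f (t * (1 - x))‖ₑ := by
  have h2 : ‖Complex.exp (Complex.I * t)‖ = 1 := by
    rw [mul_comm, Complex.norm_exp_ofReal_mul_I]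
  have h2' : ‖Complex.exp (Complex.I * t)‖ₑ = 1 := by
    rw [← ofReal_norm, h2]; simp
  rw [hfix t, enorm_mul, h2', one_mul, intervalIntegral.integral_of_le zero_le_one,
    integral_Ioc_eq_integral_Ioo]
  refine (enorm_integral_le_lintegral_enorm _).trans (le_of_eq ?_)
  congr 1
  funext x
  rw [enorm_mul, enorm_mul]
  have : ‖Complex.exp (2 * Complex.I * t * x * Real.log x +
          2 * Complex.I * t * (1 - x) * Real.log (1 - x))‖ₑ = 1 := by
    rw [← ofReal_norm, show (2 * Complex.I * t * x * Real.log x +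
          2 * Complex.I * t * (1 - x) * Real.log (1 - x)) =
          ((2 * t * x * Real.log x + 2 * t * (1 - x) * Real.log (1 - x) : ℝ) : ℂ) * Complex.I by
          push_cast; ring, Complex.norm_exp_ofReal_mul_I]
    simp
  rw [this, mul_one]

lemma qs_beta (p : ℝ) (hp0 : 0 < p) (hp : p < 1) : ∃ K : ℝ, 0 ≤ K ∧
    ∫⁻ x in Ioo (0:ℝ) 1, ENNReal.ofReal (x ^ (-p)) * ENNReal.ofReal ((1 - x) ^ (-p))
      ≤ ENNReal.ofReal K := by
  have h1 : IntervalIntegrable (fun x : ℝ => x ^ (-p)) volume 0 1 :=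
    intervalIntegral.intervalIntegrable_rpow' (by linarith)
  have h2 : IntervalIntegrable (fun x : ℝ => (1 - x) ^ (-p)) volume 0 1 := by
    have := (h1.comp_sub_left 1).symm
    simpa using this
  have h3 : IntegrableOn (fun x : ℝ => 2 ^ p * (x ^ (-p) + (1 - x) ^ (-p))) (Ioo 0 1) := by
    have := (h1.add h2).const_mul (2 ^ p)
    rw [intervalIntegrable_iff_integrableOn_Ioo_of_le zero_le_one] at this
    exact this
  refine ⟨∫ x in Ioo (0:ℝ) 1, 2 ^ p * (x ^ (-p) + (1 - x) ^ (-p)), ?_, ?_⟩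
  · refine setIntegral_nonneg measurableSet_Ioo fun x hx => ?_
    have := hx.1; have := sub_pos.2 hx.2
    positivity
  · rw [ofReal_integral_eq_lintegral_ofReal h3]
    · refine setLIntegral_mono' measurableSet_Ioo fun x hx => ?_
      have hx0 := hx.1; have hx1 := sub_pos.2 hx.2
      rw [← ENNReal.ofReal_mul (by positivity)]
      apply ENNReal.ofReal_le_ofReal
      have key : ∀ y : ℝ, 1/2 ≤ y → y ^ (-p) ≤ 2 ^ p := by
        intro y hy
        calc y ^ (-p) ≤ (1/2 : ℝ) ^ (-p) :=
              Real.rpow_le_rpow_of_nonpos (by norm_num) hy (by linarith)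
          _ = 2 ^ p := by rw [one_div, Real.inv_rpow (by norm_num), Real.rpow_neg (by norm_num), inv_inv]
      have px : 0 < x ^ (-p) := by positivity
      have py : 0 < (1 - x) ^ (-p) := by positivity
      have p2 : (0:ℝ) < 2 ^ p := by positivity
      rcases le_total x (1/2) with h | h
      · have := key (1 - x) (by linarith)
        nlinarith
      · have := key x h
        nlinarith
    · filter_upwards [ae_restrict_mem measurableSet_Ioo] with x hx
      have := hx.1; have := sub_pos.2 hx.2
      simp only [Pi.zero_apply]
      positivity

lemma qs_step (f : ℝ → ℂ)
    (hle : ∀ t : ℝ, ‖f t‖ₑ ≤ ∫⁻ x in Ioo (0:ℝ) 1, ‖f (t * x)‖ₑ * ‖f (t * (1 - x))‖ₑ)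
    (p C : ℝ) (hp0 : 0 < p) (hp : p < 1) (hC : 0 ≤ C)
    (h : ∀ t : ℝ, 0 < t → ‖f t‖ ≤ C * t ^ (-p)) :
    ∃ C' : ℝ, 0 ≤ C' ∧ ∀ t : ℝ, 0 < t → ‖f t‖ ≤ C' * t ^ (-(2 * p)) := by
  obtain ⟨K, hK, hKle⟩ := qs_beta p hp0 hp
  refine ⟨C ^ 2 * K, by positivity, fun t ht => ?_⟩
  have h1 : ‖f t‖ₑ ≤ ENNReal.ofReal (C ^ 2 * t ^ (-(2 * p))) * ENNReal.ofReal K := by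
    refine (hle t).trans (le_trans ?_ (mul_le_mul_right hKle _))
    rw [← lintegral_const_mul' _ _ ENNReal.ofReal_ne_top]
    refine setLIntegral_mono' measurableSet_Ioo fun x hx => ?_
    have hx0 := hx.1; have hx1 := sub_pos.2 hx.2
    have a1 := h (t * x) (by positivity)
    have a2 := h (t * (1 - x)) (by positivity)
    rw [← ofReal_norm, ← ofReal_norm, ← ENNReal.ofReal_mul (by positivity),
      ← ENNReal.ofReal_mul (by positivity), ← ENNReal.ofReal_mul (by positivity)]
    apply ENNReal.ofReal_le_ofReal
    calc ‖f (t * x)‖ * ‖f (t * (1 - x))‖ ≤ (C * (t * x) ^ (-p)) * (C * (t * (1 - x)) ^ (-p)) := by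
          gcongr
      _ = _ := by
        rw [Real.mul_rpow ht.le hx0.le, Real.mul_rpow ht.le hx1.le,
          show -(2 * p) = -p + -p by ring, Real.rpow_add ht]
        ring
  rw [← ENNReal.ofReal_mul (by positivity), ← ofReal_norm,
    ENNReal.ofReal_le_ofReal_iff (by positivity)] at h1
  linarith [h1]

lemma qs_int (f : ℝ → ℂ) (hc : Continuous f) (h1 : ∀ t, ‖f t‖ ≤ 1)
    (hle : ∀ t : ℝ, ‖f t‖ₑ ≤ ∫⁻ x in Ioo (0:ℝ) 1, ‖f (t * x)‖ₑ * ‖f (t * (1 - x))‖ₑ)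
    (hhalf : ∀ t : ℝ, 0 < t → ‖f t‖ ≤ 5 / √t) : IntegrableOn f (Ioi 0) := by
  obtain ⟨C1, hC1, b1⟩ := qs_step f hle (1/2) 5 (by norm_num) (by norm_num) (by norm_num) (by
    intro t ht
    rw [Real.rpow_neg ht.le, ← Real.sqrt_eq_rpow, ← div_eq_mul_inv]
    exact hhalf t ht)
  obtain ⟨C2, hC2, b2⟩ := qs_step f hle (3/4) (1 + C1) (by norm_num) (by norm_num)
    (by positivity) (by
    intro t ht
    rcases le_total t 1 with h | h
    · have : 1 ≤ t ^ (-(3/4) : ℝ) := Real.one_le_rpow_of_pos_of_le_one_of_nonpos ht h (by norm_num)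
      have := h1 t
      nlinarith
    · have a1 := b1 t ht
      have a2 : t ^ (-(2 * (1/2)) : ℝ) ≤ t ^ (-(3/4) : ℝ) :=
        Real.rpow_le_rpow_of_exponent_le h (by norm_num)
      have a3 : 0 < t ^ (-(3/4) : ℝ) := by positivity
      nlinarith)
  rw [← Ioc_union_Ioi_eq_Ioi (zero_le_one (α := ℝ))]
  refine IntegrableOn.union ?_ ?_
  · exact (hc.continuousOn.integrableOn_Icc (a := 0) (b := 1)).mono_set Ioc_subset_Icc_self
  · have := (integrableOn_Ioi_rpow_of_lt (show (-(2 * (3/4)) : ℝ) < -1 by norm_num)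
      (zero_lt_one (α := ℝ))).const_mul C2
    refine Integrable.mono' this hc.aestronglyMeasurable ?_
    filter_upwards [ae_restrict_mem measurableSet_Ioi] with t ht
    exact b2 t (lt_trans zero_lt_one ht)

lemma qs_conv (a : ℝ → ENNReal) (ha : Measurable a)
    (hle : ∀ t : ℝ, a t ≤ ∫⁻ x in Ioo (0:ℝ) 1, a (t * x) * a (t * (1 - x)))
    (b : ℝ → ENNReal) (hb : b = (Ioi (0:ℝ)).indicator a) (t : ℝ) :
    ENNReal.ofReal t * b t ≤ ∫⁻ s, b s * b (t - s) := by
  have hbm : Measurable b := hb ▸ ha.indicator measurableSet_Ioi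
  rcases le_or_gt t 0 with ht | ht
  · simp [ENNReal.ofReal_of_nonpos ht]
  · have hbt : b t = a t := by simp [hb, ht]
    have hG : Measurable fun s => b s * b (t - s) := by fun_prop
    rw [← Real.smul_map_volume_mul_left ht.ne', lintegral_smul_measure,
      lintegral_map hG (by fun_prop), abs_of_pos ht, smul_eq_mul, hbt]
    gcongr
    refine (hle t).trans ?_
    rw [← lintegral_indicator measurableSet_Ioo]
    refine lintegral_mono fun x => ?_
    by_cases hx : x ∈ Ioo (0:ℝ) 1
    · have h1 : 0 < t * x := mul_pos ht hx.1
      have h2 : 0 < t * (1 - x) := mul_pos ht (sub_pos.2 hx.2)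
      rw [indicator_of_mem hx, show t - t * x = t * (1 - x) by ring]
      simp only [hb]
      rw [indicator_of_mem (show t * x ∈ Ioi (0:ℝ) from h1),
        indicator_of_mem (show t * (1 - x) ∈ Ioi (0:ℝ) from h2)]
    · rw [indicator_of_notMem hx]; exact zero_le

lemma qs_moment (b : ℝ → ENNReal) (hb : Measurable b) (hb0 : ∀ t ≤ 0, b t = 0)
    (hconv : ∀ t : ℝ, ENNReal.ofReal t * b t ≤ ∫⁻ s, b s * b (t - s)) (n : ℕ) :
    ∫⁻ t, ENNReal.ofReal t ^ (n + 1) * b t ≤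
      ∑ k ∈ Finset.range (n + 1), (∫⁻ t, ENNReal.ofReal t ^ k * b t) *
        (∫⁻ t, ENNReal.ofReal t ^ (n - k) * b t) * (n.choose k) := by
  calc ∫⁻ t, ENNReal.ofReal t ^ (n + 1) * b t
      ≤ ∫⁻ t, ∫⁻ s, ENNReal.ofReal t ^ n * (b s * b (t - s)) := by
        refine lintegral_mono fun t => ?_
        rw [lintegral_const_mul _ (by fun_prop), pow_succ, mul_assoc]
        gcongr
        exact hconv t
    _ = ∫⁻ s, ∫⁻ t, ENNReal.ofReal t ^ n * (b s * b (t - s)) := by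
        rw [lintegral_lintegral_swap]
        apply Measurable.aemeasurable
        fun_prop
    _ = ∫⁻ s, ∫⁻ u, ENNReal.ofReal (u + s) ^ n * (b s * b u) := by
        congr 1; funext s
        rw [← lintegral_sub_right_eq_self (fun u => ENNReal.ofReal (u + s) ^ n * (b s * b u)) s]
        simp
    _ = ∫⁻ s, ∫⁻ u, ∑ k ∈ Finset.range (n + 1), (ENNReal.ofReal s ^ k * b s) *
          (ENNReal.ofReal u ^ (n - k) * b u) * (n.choose k) := by
        congr 1; funext s; congr 1; funext u
        rcases le_or_gt s 0 with hs | hs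
        · simp [hb0 s hs]
        rcases le_or_gt u 0 with hu | hu
        · simp [hb0 u hu]
        rw [add_comm u s, ENNReal.ofReal_add hs.le hu.le, add_pow, Finset.sum_mul]
        refine Finset.sum_congr rfl fun k _ => ?_
        ring
    _ = _ := by
        have : ∀ s, ∫⁻ u, ∑ k ∈ Finset.range (n + 1), (ENNReal.ofReal s ^ k * b s) *
          (ENNReal.ofReal u ^ (n - k) * b u) * (n.choose k) =
          ∑ k ∈ Finset.range (n + 1), (ENNReal.ofReal s ^ k * b s) *
          (∫⁻ u, ENNReal.ofReal u ^ (n - k) * b u) * (n.choose k) := by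
          intro s
          rw [lintegral_finsetSum _ (fun k _ => by fun_prop)]
          refine Finset.sum_congr rfl fun k _ => ?_
          rw [lintegral_mul_const _ (by fun_prop), lintegral_const_mul _ (by fun_prop)]
        simp only [this]
        rw [lintegral_finsetSum _ (fun k _ => by fun_prop)]
        refine Finset.sum_congr rfl fun k _ => ?_
        rw [lintegral_mul_const _ (by fun_prop), lintegral_mul_const _ (by fun_prop)]

lemma qs_moment_bound (m : ℕ → ENNReal)
    (h : ∀ n, m (n + 1) ≤ ∑ k ∈ Finset.range (n + 1), m k * m (n - k) * (n.choose k)) (n : ℕ) :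
    m n ≤ n.factorial * m 0 ^ (n + 1) := by
  induction n using Nat.strong_induction_on with
  | _ n ih =>
    rcases n with _ | n
    · simp
    · refine (h n).trans ?_
      have : ∀ k ∈ Finset.range (n + 1), m k * m (n - k) * (n.choose k) ≤
          n.factorial * m 0 ^ (n + 2) := by
        intro k hk
        have hk' : k ≤ n := Nat.lt_succ_iff.1 (Finset.mem_range.1 hk)
        have e1 := ih k (by omega)
        have e2 := ih (n - k) (by omega)
        calc m k * m (n - k) * (n.choose k) ≤ (k.factorial * m 0 ^ (k + 1)) *
              ((n - k).factorial * m 0 ^ (n - k + 1)) * (n.choose k) := by gcongr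
          _ = ((n.choose k * k.factorial * (n - k).factorial : ℕ) : ENNReal) *
              m 0 ^ ((k + 1) + (n - k + 1)) := by
              push_cast; rw [pow_add]; ring
          _ = _ := by
              rw [Nat.choose_mul_factorial_mul_factorial hk',
                show (k + 1) + (n - k + 1) = n + 2 by omega]
      refine (Finset.sum_le_sum this).trans (le_of_eq ?_)
      rw [Finset.sum_const, Finset.card_range, nsmul_eq_mul, Nat.factorial_succ]
      push_cast; ring

lemma qs_exp (b : ℝ → ENNReal) (hb : Measurable b) (hb0 : ∀ t ≤ 0, b t = 0)
    (hconv : ∀ t : ℝ, ENNReal.ofReal t * b t ≤ ∫⁻ s, b s * b (t - s))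
    (hfin : ∫⁻ t, b t ≠ ⊤) :
    ∃ η > (0:ℝ), ∫⁻ t, ENNReal.ofReal (Real.exp (η * t)) * b t < ⊤ := by
  set m : ℕ → ENNReal := fun n => ∫⁻ t, ENNReal.ofReal t ^ n * b t with hm
  have hm0 : m 0 = ∫⁻ t, b t := by simp [hm]
  have hmb := qs_moment_bound m (qs_moment b hb hb0 hconv)
  set M := (m 0).toReal with hM
  have hMe : m 0 = ENNReal.ofReal M := by rw [hM, ENNReal.ofReal_toReal (by rwa [hm0])]
  have hM0 : 0 ≤ M := ENNReal.toReal_nonneg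
  set η : ℝ := 1 / (2 * (M + 1)) with hη
  have hη0 : 0 < η := by positivity
  refine ⟨η, hη0, ?_⟩
  have h1 : ∀ t, ENNReal.ofReal (Real.exp (η * t)) * b t =
      ∑' n : ℕ, ENNReal.ofReal (η ^ n / n.factorial) * (ENNReal.ofReal t ^ n * b t) := by
    intro t
    rcases le_or_gt t 0 with ht | ht
    · simp [hb0 t ht]
    · have e : Real.exp (η * t) = ∑' n : ℕ, (η * t) ^ n / n.factorial := by
        rw [Real.exp_eq_exp_ℝ, NormedSpace.exp_eq_tsum_div]
      rw [e, ENNReal.ofReal_tsum_of_nonneg (fun n => by positivity)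
        (Real.summable_pow_div_factorial _), ← ENNReal.tsum_mul_right]
      congr 1; funext n
      rw [← mul_assoc, ← ENNReal.ofReal_pow ht.le, ← ENNReal.ofReal_mul (by positivity)]
      congr 2; rw [mul_pow]; ring
  simp only [h1]
  rw [lintegral_tsum (fun n => by fun_prop)]
  have h2 : ∀ n : ℕ, ∫⁻ t, ENNReal.ofReal (η ^ n / n.factorial) * (ENNReal.ofReal t ^ n * b t) ≤
      ENNReal.ofReal M * (2⁻¹ : ENNReal) ^ n := by
    intro n
    rw [lintegral_const_mul _ (by fun_prop)]
    refine (mul_le_mul_right (hmb n) _).trans ?_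
    rw [hMe, ← ENNReal.ofReal_pow hM0, ← ENNReal.ofReal_natCast,
      ← ENNReal.ofReal_mul (by positivity), ← ENNReal.ofReal_mul (by positivity)]
    have : (2⁻¹ : ENNReal) = ENNReal.ofReal (1/2) := by
      rw [one_div, ENNReal.ofReal_inv_of_pos (by norm_num)]; simp
    rw [this, ← ENNReal.ofReal_pow (by norm_num), ← ENNReal.ofReal_mul hM0]
    apply ENNReal.ofReal_le_ofReal
    have h3 : η * M ≤ 1/2 := by
      rw [hη, div_mul_eq_mul_div, div_le_div_iff₀ (by positivity) (by norm_num)]; linarith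
    have h4 : (η * M)^n ≤ (1/2)^n := pow_le_pow_left₀ (by positivity) h3 n
    have h5 : (n.factorial : ℝ) ≠ 0 := by positivity
    calc _ = M * (η * M)^n := by rw [mul_pow]; field_simp; ring
      _ ≤ _ := by gcongr
  refine (ENNReal.tsum_le_tsum h2).trans_lt ?_
  rw [ENNReal.tsum_mul_left, ENNReal.tsum_geometric, ENNReal.one_sub_inv_two, inv_inv]
  exact ENNReal.mul_lt_top ENNReal.ofReal_lt_top (by simp)

lemma qs_exp_int (f : ℝ → ℂ) (hc : Continuous f)
    (hneg : ∀ t, f (-t) = (starRingEnd ℂ) (f t))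
    (hle : ∀ t : ℝ, ‖f t‖ₑ ≤ ∫⁻ x in Ioo (0:ℝ) 1, ‖f (t * x)‖ₑ * ‖f (t * (1 - x))‖ₑ)
    (hfint : IntegrableOn f (Ioi 0)) :
    ∃ η > (0:ℝ), Integrable (fun t : ℝ => Real.exp (η * |t|) * ‖f t‖) := by
  set b : ℝ → ENNReal := (Ioi (0:ℝ)).indicator (fun t => ‖f t‖ₑ) with hb
  have hm : Measurable fun t => ‖f t‖ₑ := hc.measurable.enorm
  have hbm : Measurable b := hm.indicator measurableSet_Ioi
  obtain ⟨η, hη, h⟩ := qs_exp b hbm (fun t ht => by simp [hb, ht])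
    (qs_conv _ hm hle b hb) (by
      rw [hb, lintegral_indicator measurableSet_Ioi]
      exact hfint.2.ne)
  refine ⟨η, hη, ?_⟩
  have hpos : IntegrableOn (fun t : ℝ => Real.exp (η * |t|) * ‖f t‖) (Ioi 0) := by
    refine ⟨by fun_prop, ?_⟩
    refine lt_of_le_of_lt ?_ h
    rw [← lintegral_indicator measurableSet_Ioi]
    refine lintegral_mono fun t => ?_
    by_cases ht : t ∈ Ioi (0:ℝ)
    · have ht' : 0 < t := ht
      rw [indicator_of_mem ht, enorm_mul, hb, indicator_of_mem ht, enorm_norm, abs_of_pos ht',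
        ← ofReal_norm, Real.norm_of_nonneg (Real.exp_pos _).le]
    · rw [indicator_of_notMem ht]; exact zero_le
  have hcont : Continuous (fun t : ℝ => Real.exp (η * |t|) * ‖f t‖) := by fun_prop
  rw [← integrableOn_univ, ← Iic_union_Ioi (a := (0:ℝ))]
  refine IntegrableOn.union ?_ hpos
  rw [integrableOn_Iic_iff_integrableOn_Iio]
  have := IntegrableOn.comp_neg_Iio (c := (0:ℝ)) (by rw [neg_zero]; exact hpos)
  simpa [hneg] using this

lemma qs_nonneg (μ : Measure ℝ) [IsProbabilityMeasure μ] (p : ℝ → ℝ) (hp : Continuous p)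
    (h : ∀ φ : ℝ → ℝ, ContDiff ℝ ∞ φ → HasCompactSupport φ → ∫ x, φ x ∂μ = ∫ x, φ x * p x)
    (x : ℝ) : 0 ≤ p x := by
  by_contra! hx
  obtain ⟨ε, hε, hU⟩ := Metric.mem_nhds_iff.1 (hp.continuousAt.preimage_mem_nhds (Iio_mem_nhds hx))
  obtain ⟨φ, hs, hd, hr⟩ := (Metric.isOpen_ball (x := x) (ε := ε)).exists_contDiff_support_eq
    (n := ⊤)
  have hφ0 : ∀ y, 0 ≤ φ y := fun y => (hr (mem_range_self y)).1
  have hcs : HasCompactSupport φ := by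
    refine HasCompactSupport.intro (isCompact_closedBall x ε) fun y hy => ?_
    by_contra hne
    exact hy (Metric.ball_subset_closedBall (hs ▸ Function.mem_support.2 hne))
  have h1 := h φ hd hcs
  have h2 : 0 ≤ ∫ y, φ y ∂μ := integral_nonneg hφ0
  have h3 : 0 < ∫ y, φ y * (-p y) := by
    refine Continuous.integral_pos_of_hasCompactSupport_nonneg_nonzero (x := x)
      (hd.continuous.mul hp.neg) hcs.mul_right ?_ ?_
    · intro y
      by_cases hy : φ y = 0
      · simp [hy]
      · have : y ∈ Metric.ball x ε := hs ▸ Function.mem_support.2 hy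
        have := hU this
        simp only [mem_preimage, mem_Iio] at this
        exact mul_nonneg (hφ0 y) (by linarith)
    · have : x ∈ Function.support φ := hs ▸ Metric.mem_ball_self hε
      exact mul_ne_zero this (by linarith)
  simp only [mul_neg, integral_neg] at h3
  linarith

lemma qs_tendsto (ν : Measure ℝ) (φ : ℝ → ℝ) (hφ : Continuous φ) (hφ0 : ∀ y, 0 ≤ φ y)
    (hfin : ν (Function.support φ) ≠ ⊤) :
    Tendsto (fun n : ℕ => ∫⁻ x, ENNReal.ofReal (Real.smoothTransition (n * φ x)) ∂ν) atTop
      (𝓝 (ν (Function.support φ))) := by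
  have hms : MeasurableSet (Function.support φ) := hφ.isOpen_support.measurableSet
  rw [← lintegral_indicator_one hms]
  refine tendsto_lintegral_of_dominated_convergence ((Function.support φ).indicator 1) ?_ ?_ ?_ ?_
  · intro n
    have := Real.smoothTransition.continuous
    exact (ENNReal.continuous_ofReal.comp (this.comp (continuous_const.mul hφ))).measurable
  · intro n
    refine Eventually.of_forall fun x => ?_
    by_cases hx : φ x = 0
    · simp [hx, Real.smoothTransition.zero]
    · rw [indicator_of_mem (Function.mem_support.2 hx)]
      simpa using Real.smoothTransition.le_one _
  · rw [lintegral_indicator_one hms]; exact hfin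
  · refine Eventually.of_forall fun x => ?_
    by_cases hx : φ x = 0
    · simp [hx, Real.smoothTransition.zero]
    · rw [indicator_of_mem (Function.mem_support.2 hx)]
      have hpos : 0 < φ x := lt_of_le_of_ne (hφ0 x) (Ne.symm hx)
      refine tendsto_const_nhds.congr' ?_
      obtain ⟨N, hN⟩ := exists_nat_gt (1 / φ x)
      filter_upwards [eventually_ge_atTop N] with n hn
      have : 1 ≤ n * φ x := by
        have h1 : (N:ℝ) ≤ n := by exact_mod_cast hn
        rw [div_lt_iff₀ hpos] at hN
        nlinarith
      simp [Real.smoothTransition.one_of_one_le this]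

lemma qs_measure_eq (μ : Measure ℝ) [IsProbabilityMeasure μ] (p : ℝ → ℝ) (hp : Continuous p)
    (M : ℝ) (hM : ∀ x, |p x| ≤ M)
    (h : ∀ φ : ℝ → ℝ, ContDiff ℝ ∞ φ → HasCompactSupport φ → ∫ x, φ x ∂μ = ∫ x, φ x * p x) :
    μ = volume.withDensity (fun x => ENNReal.ofReal (p x)) := by
  have hp0 := qs_nonneg μ p hp h
  have hpm : Measurable fun x => ENNReal.ofReal (p x) := hp.measurable.ennreal_ofReal
  refine Real.measure_ext_Ioo_rat fun a b => ?_
  obtain ⟨φ, hs, hd, hr⟩ := (isOpen_Ioo (a := (a:ℝ)) (b := (b:ℝ))).exists_contDiff_support_eq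
    (n := ⊤)
  have hφ0 : ∀ y, 0 ≤ φ y := fun y => (hr (mem_range_self y)).1
  have t1 := qs_tendsto μ φ hd.continuous hφ0 (measure_ne_top _ _)
  have t2 := qs_tendsto (volume.withDensity (fun x => ENNReal.ofReal (p x))) φ hd.continuous hφ0
    (by
      rw [hs, withDensity_apply _ measurableSet_Ioo]
      have : ∫⁻ x in Ioo (a:ℝ) b, ENNReal.ofReal (p x) ≤ ∫⁻ x in Ioo (a:ℝ) b, ENNReal.ofReal M :=
        lintegral_mono fun x => ENNReal.ofReal_le_ofReal ((le_abs_self _).trans (hM x))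
      refine (this.trans_lt ?_).ne
      rw [setLIntegral_const]
      exact ENNReal.mul_lt_top ENNReal.ofReal_lt_top (by simp))
  rw [hs] at t1 t2
  refine tendsto_nhds_unique t1 (t2.congr fun n => ?_)
  set ψ : ℝ → ℝ := fun x => Real.smoothTransition (n * φ x) with hψ
  have hψd : ContDiff ℝ ∞ ψ := Real.smoothTransition.contDiff.comp (contDiff_const.mul hd)
  have hψc := hψd.continuous
  have hψ0 : ∀ x, 0 ≤ ψ x := fun x => Real.smoothTransition.nonneg _
  have hcs : HasCompactSupport ψ := by
    refine HasCompactSupport.intro (isCompact_Icc (a := (a:ℝ)) (b := (b:ℝ))) fun y hy => ?_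
    have : φ y = 0 := by
      by_contra hne
      exact hy (Ioo_subset_Icc_self (hs ▸ Function.mem_support.2 hne))
    simp [hψ, this, Real.smoothTransition.zero]
  change ∫⁻ x, ENNReal.ofReal (ψ x) ∂(volume.withDensity _) = ∫⁻ x, ENNReal.ofReal (ψ x) ∂μ
  rw [lintegral_withDensity_eq_lintegral_mul _ hpm (hψc.measurable.ennreal_ofReal),
    ← ofReal_integral_eq_lintegral_ofReal (hψc.integrable_of_hasCompactSupport hcs)
      (Eventually.of_forall hψ0), h ψ hψd hcs,
    ofReal_integral_eq_lintegral_ofReal (f := fun x => ψ x * p x)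
      ((hψc.mul hp).integrable_of_hasCompactSupport hcs.mul_right)
      (Eventually.of_forall fun x => mul_nonneg (hψ0 x) (hp0 x))]
  congr 1; funext x
  simp only [Pi.mul_apply]
  rw [← ENNReal.ofReal_mul (hp0 x), mul_comm]

lemma qs_pairing (μ : Measure ℝ) [IsProbabilityMeasure μ] (f : ℝ → ℂ)
    (hf : ∀ t : ℝ, f t = ∫ x : ℝ, Complex.exp (Complex.I * t * x) ∂μ)
    (hfi : Integrable f) (φ : SchwartzMap ℝ ℂ) :
    ∫ x, φ x ∂μ = ∫ x, φ x *
      ((1 / (2 * (Real.pi : ℂ))) * ∫ t : ℝ, f t * Complex.exp (-(Complex.I * x * t))) := by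
  set g : SchwartzMap ℝ ℂ := 𝓕⁻ φ with hg
  have hgφ : 𝓕 g = φ := FourierTransform.fourier_fourierInv_eq φ
  set F : ℝ → ℂ := fun w => f (-(2 * Real.pi) * w) with hF
  have hFi : Integrable F := hfi.comp_mul_left' (by simp [Real.pi_ne_zero])
  have hL : Continuous fun q : ℝ × ℝ => (LinearMap.mul ℝ ℝ) q.1 q.2 := by
    simp only [LinearMap.mul_apply']; fun_prop
  have hL' : Continuous fun q : ℝ × ℝ => (-(LinearMap.mul ℝ ℝ)) q.1 q.2 := by
    simp only [LinearMap.neg_apply, LinearMap.mul_apply']; fun_prop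
  have e1 := VectorFourier.integral_fourierIntegral_smul_eq_flip (μ := μ) (ν := volume)
    (L := LinearMap.mul ℝ ℝ) (f := fun _ => (1:ℂ)) (g := g) Real.continuous_fourierChar hL
    (integrable_const _) g.integrable
  have e2 := VectorFourier.integral_fourierIntegral_smul_eq_flip (μ := volume) (ν := volume)
    (L := -LinearMap.mul ℝ ℝ) (f := φ) (g := F) Real.continuous_fourierChar hL'
    φ.integrable hFi
  have a1 : ∀ ξ, VectorFourier.fourierIntegral 𝐞 μ (LinearMap.mul ℝ ℝ) (fun _ => (1:ℂ)) ξ = F ξ := by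
    intro ξ
    simp only [VectorFourier.fourierIntegral, hF, hf, LinearMap.mul_apply', Circle.smul_def,
      Real.fourierChar_apply, smul_eq_mul, mul_one]
    congr 1; funext x; congr 1; push_cast; ring
  have a2 : ∀ x, VectorFourier.fourierIntegral 𝐞 volume (LinearMap.mul ℝ ℝ).flip g x = φ x := by
    intro x
    rw [← hgφ, SchwartzMap.fourier_coe, Real.fourier_real_eq]
    simp only [VectorFourier.fourierIntegral, LinearMap.flip_apply, LinearMap.mul_apply']
    congr 1; funext v; rw [mul_comm]
  have a3 : ∀ ξ, VectorFourier.fourierIntegral 𝐞 volume (-LinearMap.mul ℝ ℝ) φ ξ = g ξ := by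
    intro ξ
    rw [hg, SchwartzMap.fourierInv_coe, Real.fourierInv_eq']
    simp only [VectorFourier.fourierIntegral, LinearMap.neg_apply, LinearMap.mul_apply', neg_neg,
      Circle.smul_def, Real.fourierChar_apply]
    congr 1; funext x; congr 2; simp; ring
  have a4 : ∀ x, VectorFourier.fourierIntegral 𝐞 volume (-LinearMap.mul ℝ ℝ).flip F x =
      (1 / (2 * (Real.pi : ℂ))) * ∫ t : ℝ, f t * Complex.exp (-(Complex.I * x * t)) := by
    intro x
    have := Measure.integral_comp_mul_left
      (fun t : ℝ => f t * Complex.exp (-(Complex.I * x * t))) (-(2 * Real.pi))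
    rw [show (1 / (2 * (Real.pi : ℂ))) = ((|(-(2 * Real.pi))⁻¹| : ℝ) : ℂ) by
      rw [abs_inv, abs_neg, abs_of_pos Real.two_pi_pos]; push_cast; simp, ← smul_eq_mul,
      Complex.coe_smul, ← this]
    simp only [VectorFourier.fourierIntegral, LinearMap.flip_apply, LinearMap.neg_apply,
      LinearMap.mul_apply', neg_neg, Circle.smul_def, Real.fourierChar_apply, hF]
    congr 1; funext w
    rw [smul_eq_mul, mul_comm]; congr 2; push_cast; ring
  simp only [a1, a2, a3, a4, smul_eq_mul, one_mul] at e1 e2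
  rw [← e1, ← e2]
  congr 1; funext ξ; ring

lemma qs_strip_int (f : ℝ → ℂ) (hc : Continuous f) (η : ℝ)
    (hi : Integrable (fun t : ℝ => Real.exp (η * |t|) * ‖f t‖)) (s : ℂ) (hs : |s.im| < η) :
    Integrable (fun t : ℝ => f t * Complex.exp (-(Complex.I * s * t))) := by
  refine hi.mono' (by fun_prop) (Eventually.of_forall fun t => ?_)
  rw [norm_mul, mul_comm, Complex.norm_exp]
  gcongr
  simp
  calc s.im * t ≤ |s.im * t| := le_abs_self _
    _ = |s.im| * |t| := abs_mul _ _
    _ ≤ _ := by gcongr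

lemma qs_strip_diff (f : ℝ → ℂ) (hc : Continuous f) (η : ℝ)
    (hi : Integrable (fun t : ℝ => Real.exp (η * |t|) * ‖f t‖)) (s : ℂ) (hs : |s.im| < η) :
    DifferentiableAt ℂ (fun s : ℂ => ∫ t : ℝ, f t * Complex.exp (-(Complex.I * s * t))) s := by
  obtain ⟨r, hr1, hr2⟩ := exists_between hs
  have hopen : IsOpen {z : ℂ | |z.im| < r} := isOpen_lt (by fun_prop) continuous_const
  refine (hasDerivAt_integral_of_dominated_loc_of_deriv_le (hopen.mem_nhds hr1)
    (F' := fun z t => f t * (Complex.exp (-(Complex.I * z * t)) * (-(Complex.I * t))))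
    (bound := fun t => (η - r)⁻¹ * (Real.exp (η * |t|) * ‖f t‖))
    (Eventually.of_forall fun z => by fun_prop) (qs_strip_int f hc η hi s hs) (by fun_prop)
    (Eventually.of_forall fun t z hz => ?_) (hi.const_mul _)
    (Eventually.of_forall fun t z hz => ?_)).2.differentiableAt
  · have hz' : |z.im| < r := hz
    have h1 : ‖Complex.exp (-(Complex.I * z * t))‖ ≤ Real.exp (r * |t|) := by
      rw [Complex.norm_exp]
      apply Real.exp_le_exp.2
      simp
      calc z.im * t ≤ |z.im * t| := le_abs_self _
        _ = |z.im| * |t| := abs_mul _ _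
        _ ≤ _ := by gcongr
    have hpos : 0 < η - r := by linarith
    have h2 : |t| ≤ (η - r)⁻¹ * Real.exp ((η - r) * |t|) := by
      rw [inv_mul_eq_div, le_div_iff₀ hpos]
      linarith [Real.add_one_le_exp ((η - r) * |t|)]
    have h3 : ‖-(Complex.I * (t:ℂ))‖ = |t| := by simp
    rw [norm_mul, norm_mul, h3]
    calc ‖f t‖ * (‖Complex.exp (-(Complex.I * z * t))‖ * |t|)
        ≤ ‖f t‖ * (Real.exp (r * |t|) * ((η - r)⁻¹ * Real.exp ((η - r) * |t|))) := by gcongr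
      _ = (η - r)⁻¹ * ((Real.exp (r * |t|) * Real.exp ((η - r) * |t|)) * ‖f t‖) := by ring
      _ = _ := by rw [← Real.exp_add]; congr 3; ring
  · have h1 : HasDerivAt (fun z : ℂ => -(Complex.I * z * t)) (-(Complex.I * t)) z := by
      have := (((hasDerivAt_id z).const_mul Complex.I).mul_const (t:ℂ)).neg
      rw [mul_one] at this
      exact this
    exact h1.cexp.const_mul (f t)

theorem quicksort_density_analytic_extension
    (μ : MeasureTheory.Measure ℝ) [MeasureTheory.IsProbabilityMeasure μ]
    (hmom : MeasureTheory.Integrable (fun x : ℝ => |x|) μ)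
    (f : ℝ → ℂ)
    (hf : ∀ t : ℝ, f t = ∫ x : ℝ, Complex.exp (Complex.I * t * x) ∂μ)
    (hfix : ∀ t : ℝ, f t = Complex.exp (Complex.I * t) *
      ∫ x in (0:ℝ)..1, f (t * x) * f (t * (1 - x)) *
        Complex.exp (2 * Complex.I * t * x * Real.log x +
          2 * Complex.I * t * (1 - x) * Real.log (1 - x))) :
    ∃ η > (0:ℝ), ∃ p : ℝ → ℝ,
      Continuous p ∧
      (∃ M : ℝ, ∀ x : ℝ, |p x| ≤ M) ∧
      (∀ x : ℝ, (p x : ℂ) =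
        (1 / (2 * (Real.pi : ℂ))) * ∫ t : ℝ, f t * Complex.exp (-(Complex.I * x * t))) ∧
      μ = MeasureTheory.volume.withDensity (fun x => ENNReal.ofReal (p x)) ∧
      (∀ s : ℂ, |s.im| < η →
        MeasureTheory.Integrable (fun t : ℝ => f t * Complex.exp (-(Complex.I * s * t)))) ∧
      ∃ P : ℂ → ℂ,
        AnalyticOnNhd ℂ P {s : ℂ | |s.im| < η} ∧
        (∀ s : ℂ, |s.im| < η →
          P s = (1 / (2 * (Real.pi : ℂ))) * ∫ t : ℝ, f t * Complex.exp (-(Complex.I * s * t))) ∧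
        (∀ x : ℝ, P (x : ℂ) = (p x : ℂ)) := by
  have hc := qs_f_continuous μ f hf
  have hneg := qs_f_neg μ f hf
  have hle := qs_enorm_le f hfix
  have hint0 := qs_int f hc (qs_f_norm_le_one μ f hf) hle (qs_half μ f hf hfix)
  obtain ⟨η, hη, hi⟩ := qs_exp_int f hc hneg hle hint0
  have hstrip := qs_strip_int f hc η hi
  have hfi : Integrable f := by
    have := hstrip 0 (by simpa using hη)
    simpa using this
  set P : ℂ → ℂ := fun s =>
    (1 / (2 * (Real.pi : ℂ))) * ∫ t : ℝ, f t * Complex.exp (-(Complex.I * s * t)) with hP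
  have hPd : ∀ s : ℂ, |s.im| < η → DifferentiableAt ℂ P s := fun s hs =>
    (qs_strip_diff f hc η hi s hs).const_mul _
  set p : ℝ → ℝ := fun x => (P x).re with hp
  have hpP : ∀ x : ℝ, (p x : ℂ) = P x := by
    intro x
    rw [hp]
    refine Complex.conj_eq_iff_re.1 ?_
    simp only [hP, map_mul, map_div₀, map_one, map_ofNat, Complex.conj_ofReal]
    congr 1
    rw [← integral_conj, ← integral_neg_eq_self]
    congr 1; funext t
    rw [map_mul, hneg, Complex.conj_conj, ← Complex.exp_conj]
    simp
  have hpc : Continuous p := by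
    refine Complex.continuous_re.comp (continuous_iff_continuousAt.2 fun x => ?_)
    have h1 : ContinuousAt P (x : ℂ) := (hPd x (by simpa using hη)).continuousAt
    exact ContinuousAt.comp (f := fun x : ℝ => (x : ℂ)) h1 Complex.continuous_ofReal.continuousAt
  have hpb : ∀ x, |p x| ≤ ‖(1 / (2 * (Real.pi : ℂ)))‖ * ∫ t, ‖f t‖ := by
    intro x
    rw [← Real.norm_eq_abs, ← Complex.norm_real, hpP x]
    simp only [hP, norm_mul]
    gcongr
    refine (norm_integral_le_integral_norm _).trans (le_of_eq ?_)
    congr 1; funext t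
    rw [norm_mul, Complex.norm_exp]; simp
  refine ⟨η, hη, p, hpc, ⟨_, hpb⟩, fun x => hpP x, ?_, hstrip, P, ?_, fun s _ => rfl,
    fun x => (hpP x).symm⟩
  · refine qs_measure_eq μ p hpc _ hpb fun φ hφ hcs => ?_
    have hφ' : ContDiff ℝ ∞ fun x => (φ x : ℂ) := Complex.ofRealCLM.contDiff.comp hφ
    have hcs' : HasCompactSupport fun x => (φ x : ℂ) :=
      hcs.comp_left (g := fun y : ℝ => (y : ℂ)) Complex.ofReal_zero
    have := qs_pairing μ f hf hfi (hcs'.toSchwartzMap hφ')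
    have h2 : ∫ x, (φ x : ℂ) ∂μ = ∫ x, (φ x : ℂ) * (p x : ℂ) := by
      simp only [hpP]
      exact this
    have h3 : ∀ x, (φ x : ℂ) * (p x : ℂ) = ((φ x * p x : ℝ) : ℂ) := by intro x; push_cast; ring
    simp only [h3] at h2
    rw [integral_complex_ofReal, integral_complex_ofReal] at h2
    exact_mod_cast h2
  · refine DifferentiableOn.analyticOnNhd (fun s hs => (hPd s hs).differentiableWithinAt) ?_
    exact isOpen_lt (by fun_prop) continuous_const
end

section
/- For every t > 0 and every σ > 0, the Laplace inversion formula holds: f(t) e^{2it log t} = (1/(2πi·t)) ∫_{σ−i∞}^{σ+i∞} ψ(s−i)² e^{ts} ds, where the integral is taken over the vertical line Re s = σ. -/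
namespace QS
open MeasureTheory Set Filter Topology Complex
open scoped FourierTransform Real

lemma hasDerivAt_f (μ : Measure ℝ) [IsProbabilityMeasure μ]
    (hmom : Integrable (fun x : ℝ => |x|) μ) (f : ℝ → ℂ)
    (hf : ∀ t : ℝ, f t = ∫ x : ℝ, cexp (I * t * x) ∂μ) :
    ∃ M : ℝ, ∀ t, ∃ d : ℂ, ‖d‖ ≤ M ∧ HasDerivAt f d t := by
  refine ⟨∫ x : ℝ, |x| ∂μ, fun t => ⟨∫ x : ℝ, cexp (I * t * x) * (I * x) ∂μ, ?_, ?_⟩⟩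
  · refine norm_integral_le_of_norm_le hmom (Eventually.of_forall fun x => ?_)
    rw [norm_mul, show I * (t:ℂ) * x = ((t * x : ℝ) : ℂ) * I by push_cast; ring, norm_exp_ofReal_mul_I]
    simp
  · have hfe : f = fun t : ℝ => ∫ x : ℝ, cexp (I * t * x) ∂μ := funext hf
    rw [hfe]
    refine (hasDerivAt_integral_of_dominated_loc_of_deriv_le (μ := μ) (s := univ)
      (F := fun (t : ℝ) (x : ℝ) => cexp (I * t * x))
      (F' := fun (t : ℝ) (x : ℝ) => cexp (I * t * x) * (I * x)) (bound := fun x => |x|)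
      univ_mem ?_ ?_ ?_ ?_ hmom ?_).2
    · exact Eventually.of_forall fun t => Continuous.aestronglyMeasurable (by fun_prop)
    · refine Integrable.of_bound (C := 1) (Continuous.aestronglyMeasurable (by fun_prop)) (Eventually.of_forall fun x => ?_)
      rw [show I * (t:ℂ) * x = ((t * x : ℝ) : ℂ) * I by push_cast; ring, norm_exp_ofReal_mul_I]
    · exact Continuous.aestronglyMeasurable (by fun_prop)
    · refine Eventually.of_forall fun x t _ => ?_
      rw [norm_mul, show I * (t:ℂ) * x = ((t * x : ℝ) : ℂ) * I by push_cast; ring, norm_exp_ofReal_mul_I]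
      simp
    · refine Eventually.of_forall fun x t _ => ?_
      have h1 : HasDerivAt (fun t : ℝ => (t : ℂ)) 1 t := ofRealCLM.hasDerivAt
      have := ((h1.const_mul I).mul_const (x:ℂ)).cexp
      simpa using this

lemma norm_f_le (μ : Measure ℝ) [IsProbabilityMeasure μ] (f : ℝ → ℂ)
    (hf : ∀ t : ℝ, f t = ∫ x : ℝ, cexp (I * t * x) ∂μ) (t : ℝ) : ‖f t‖ ≤ 1 := by
  rw [hf]
  refine (norm_integral_le_of_norm_le (integrable_const (1:ℝ)) (Eventually.of_forall fun x => ?_)).trans (by simp)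
  rw [show I * (t:ℂ) * x = ((t * x : ℝ) : ℂ) * I by push_cast; ring, norm_exp_ofReal_mul_I]

lemma norm_E (t : ℝ) : ‖cexp (2 * I * t * Real.log t)‖ = 1 := by
  rw [show 2 * I * (t:ℂ) * Real.log t = ((2 * t * Real.log t : ℝ) : ℂ) * I by push_cast; ring,
    norm_exp_ofReal_mul_I]

lemma norm_g_le (f : ℝ → ℂ) (hf1 : ∀ t, ‖f t‖ ≤ 1) (t : ℝ) :
    ‖f t * cexp (2 * I * t * Real.log t)‖ ≤ 1 := by
  rw [norm_mul, norm_E, mul_one]; exact hf1 t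

lemma continuous_g (f : ℝ → ℂ) (hfc : Continuous f) :
    Continuous (fun t : ℝ => f t * cexp (2 * I * t * Real.log t)) := by
  have h := Real.continuous_mul_log
  have : (fun t : ℝ => f t * cexp (2 * I * t * Real.log t)) =
      fun t : ℝ => f t * cexp (2 * I * ((t * Real.log t : ℝ) : ℂ)) := by
    ext t; push_cast; ring_nf
  rw [this]
  fun_prop

lemma norm_exp_neg (s : ℂ) (t : ℝ) : ‖cexp (-(s * t))‖ = Real.exp (-s.re * t) := by
  rw [Complex.norm_exp]; simp

lemma abs_log_le {t : ℝ} (ht : 0 < t) : |Real.log t| ≤ t + 2 * t ^ (-(1/2) : ℝ) := by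
  have h1 : Real.log t ≤ t := by linarith [Real.log_le_sub_one_of_pos ht]
  have hp : 0 < t ^ (-(1/2) : ℝ) := Real.rpow_pos_of_pos ht _
  have h2 := Real.log_le_sub_one_of_pos hp
  rw [Real.log_rpow ht] at h2
  rw [abs_le]; constructor <;> linarith

lemma integrable_bound (M σ : ℝ) (hσ : 0 < σ) :
    IntegrableOn (fun t : ℝ => (M + 2 * (|Real.log t| + 1)) * Real.exp (-σ * t)) (Ioi 0) := by
  have key : ∀ p : ℝ, -1 < p → IntegrableOn (fun t : ℝ => t ^ p * Real.exp (-σ * t)) (Ioi 0) := by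
    intro p hp
    simpa using integrableOn_rpow_mul_exp_neg_mul_rpow (p := 1) hp one_pos hσ
  have i0 : IntegrableOn (fun t : ℝ => Real.exp (-σ * t)) (Ioi 0) := by
    simpa using key 0 (by norm_num)
  have i1 : IntegrableOn (fun t : ℝ => t * Real.exp (-σ * t)) (Ioi 0) := by
    simpa using key 1 (by norm_num)
  have i2 := key (-(1/2)) (by norm_num)
  have i3 : IntegrableOn (fun t : ℝ => |Real.log t| * Real.exp (-σ * t)) (Ioi 0) := by
    refine Integrable.mono' (i1.add (i2.const_mul 2)) ?_ ?_
    · exact Measurable.aestronglyMeasurable (by fun_prop)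
    · refine (ae_restrict_iff' measurableSet_Ioi).2 (Eventually.of_forall fun t ht => ?_)
      have := abs_log_le (mem_Ioi.1 ht)
      have he := (Real.exp_pos (-σ * t)).le
      simp only [norm_mul, Real.norm_eq_abs, abs_abs, Real.abs_exp, Pi.add_apply]
      nlinarith [mul_le_mul_of_nonneg_right this he]
  refine ((i0.const_mul (M + 2)).add (i3.const_mul 2)).congr (Eventually.of_forall fun t => ?_)
  simp only [Pi.add_apply]; ring

lemma integrable_g (g : ℝ → ℂ) (hgc : Continuous g) (hg1 : ∀ t, ‖g t‖ ≤ 1) (s : ℂ) (hs : 0 < s.re) :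
    IntegrableOn (fun t : ℝ => g t * cexp (-(s * t))) (Ioi 0) := by
  have i0 : IntegrableOn (fun t : ℝ => Real.exp (-s.re * t)) (Ioi 0) := integrableOn_exp_mul_Ioi (by linarith) 0
  refine Integrable.mono' i0 (Continuous.aestronglyMeasurable (by fun_prop)) (Eventually.of_forall fun t => ?_)
  rw [norm_mul, norm_exp_neg]
  exact mul_le_of_le_one_left (Real.exp_pos _).le (hg1 t)

lemma integrable_tg (g : ℝ → ℂ) (hgc : Continuous g) (hg1 : ∀ t, ‖g t‖ ≤ 1) (s : ℂ) (hs : 0 < s.re) :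
    IntegrableOn (fun t : ℝ => t * g t * cexp (-(s * t))) (Ioi 0) := by
  have i0 : IntegrableOn (fun t : ℝ => t * Real.exp (-s.re * t)) (Ioi 0) := by
    simpa using integrableOn_rpow_mul_exp_neg_mul_rpow (p := 1) (s := 1) (by norm_num) one_pos hs
  refine Integrable.mono' i0 (Continuous.aestronglyMeasurable (by fun_prop)) ?_
  refine (ae_restrict_iff' measurableSet_Ioi).2 (Eventually.of_forall fun t ht => ?_)
  have ht : 0 < t := ht
  rw [norm_mul, norm_exp_neg, norm_mul, norm_real, Real.norm_of_nonneg ht.le]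
  gcongr
  exact mul_le_of_le_one_right ht.le (hg1 t)

lemma decay (f : ℝ → ℂ) (hf1 : ∀ t, ‖f t‖ ≤ 1) (M : ℝ)
    (hfd : ∀ t, ∃ d : ℂ, ‖d‖ ≤ M ∧ HasDerivAt f d t) (σ : ℝ) (hσ : 0 < σ) :
    ∃ C : ℝ, ∀ s : ℂ, s.re = σ → ‖s * ∫ t in Ioi (0:ℝ),
      f t * cexp (2 * I * t * Real.log t) * cexp (-(s * t))‖ ≤ C := by
  have hfc : Continuous f := by
    refine continuous_iff_continuousAt.2 fun t => ?_
    obtain ⟨d, -, hd⟩ := hfd t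
    exact hd.continuousAt
  have hgc := continuous_g f hfc
  have hg1 := norm_g_le f hf1
  have hMd : ∀ t, ‖deriv f t‖ ≤ M := fun t => by
    obtain ⟨d, h, hd⟩ := hfd t
    rwa [hd.deriv]
  set g : ℝ → ℂ := fun t : ℝ => f t * cexp (2 * I * t * Real.log t) with hg
  let g' : ℝ → ℂ := fun t => deriv f t * cexp (2 * I * t * Real.log t) +
    f t * (cexp (2 * I * t * Real.log t) * (2 * I * (Real.log t + 1)))
  have hgd : ∀ t : ℝ, 0 < t → HasDerivAt g (g' t) t := by
    intro t ht
    obtain ⟨d, -, hd⟩ := hfd t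
    have hd' : HasDerivAt f (deriv f t) t := by rwa [hd.deriv]
    have h1 : HasDerivAt (fun t : ℝ => (t : ℂ)) 1 t := ofRealCLM.hasDerivAt
    have h2 : HasDerivAt (fun t : ℝ => (Real.log t : ℂ)) ((t⁻¹ : ℝ) : ℂ) t :=
      (Real.hasDerivAt_log ht.ne').ofReal_comp
    have h3 := ((h1.const_mul (2 * I)).mul h2).cexp
    refine (hd'.mul h3).congr_deriv ?_
    have ht0 : (t:ℂ) ≠ 0 := by exact_mod_cast ht.ne'
    simp only [g', Pi.mul_apply]
    push_cast
    field_simp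
  have hg'm : Measurable g' := by
    have := measurable_deriv f
    have := hfc.measurable
    fun_prop
  have hg'b : ∀ t, ‖g' t‖ ≤ M + 2 * (|Real.log t| + 1) := by
    intro t
    refine (norm_add_le _ _).trans (add_le_add ?_ ?_)
    · rw [norm_mul, norm_E, mul_one]; exact hMd t
    · rw [norm_mul, norm_mul, norm_E, one_mul]
      refine (mul_le_of_le_one_left (norm_nonneg _) (hf1 t)).trans ?_
      rw [norm_mul, norm_mul]
      simp only [norm_I, mul_one, norm_ofNat]
      gcongr
      refine (norm_add_le _ _).trans ?_
      simp
  have hib := integrable_bound M σ hσ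
  refine ⟨1 + ∫ t in Ioi (0:ℝ), (M + 2 * (|Real.log t| + 1)) * Real.exp (-σ * t), fun s hs => ?_⟩
  have hnb : ∀ t, ‖g' t * cexp (-(s * t))‖ ≤ (M + 2 * (|Real.log t| + 1)) * Real.exp (-σ * t) := by
    intro t
    rw [norm_mul, norm_exp_neg, hs]
    exact mul_le_mul_of_nonneg_right (hg'b t) (Real.exp_pos _).le
  have ig' : IntegrableOn (fun t : ℝ => g' t * cexp (-(s * t))) (Ioi 0) :=
    Integrable.mono' hib (Measurable.aestronglyMeasurable (by fun_prop)) (Eventually.of_forall hnb)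
  have ig := integrable_g g hgc hg1 s (hs ▸ hσ)
  have hder : ∀ t ∈ Ioi (0:ℝ), HasDerivAt (fun t : ℝ => g t * cexp (-(s * t)))
      (g' t * cexp (-(s * t)) - s * (g t * cexp (-(s * t)))) t := by
    intro t ht
    have h1 : HasDerivAt (fun t : ℝ => (t : ℂ)) 1 t := ofRealCLM.hasDerivAt
    refine ((hgd t ht).mul (h1.const_mul s).neg.cexp).congr_deriv ?_
    simp only [Pi.neg_apply]
    ring
  have htend : Tendsto (fun t : ℝ => g t * cexp (-(s * t))) atTop (𝓝 0) := by
    have h0 : Tendsto (fun t : ℝ => Real.exp (-σ * t)) atTop (𝓝 0) := by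
      refine Real.tendsto_exp_atBot.comp ?_
      exact tendsto_id.const_mul_atTop_of_neg (by linarith)
    refine squeeze_zero_norm (fun t => ?_) h0
    rw [norm_mul, norm_exp_neg, hs]
    exact mul_le_of_le_one_left (Real.exp_pos _).le (hg1 t)
  have hcont : Continuous (fun t : ℝ => g t * cexp (-(s * t))) := by fun_prop
  have hftc := integral_Ioi_of_hasDerivAt_of_tendsto hcont.continuousWithinAt hder
    (ig'.sub (ig.const_mul s)) htend
  rw [integral_sub ig' (ig.const_mul s), integral_const_mul] at hftc
  have heq : s * ∫ t in Ioi (0:ℝ), g t * cexp (-(s * t)) =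
      g 0 * cexp (-(s * (0:ℝ))) + ∫ t in Ioi (0:ℝ), g' t * cexp (-(s * t)) := by
    linear_combination -hftc
  rw [heq]
  refine (norm_add_le _ _).trans (add_le_add ?_ ?_)
  · have h0 : ‖g 0‖ ≤ 1 := hg1 0
    simpa using h0
  · exact norm_integral_le_of_norm_le hib (Eventually.of_forall hnb)

lemma conv_eq (f : ℝ → ℂ) 
    (hfix : ∀ t : ℝ, f t = cexp (I * t) *
      ∫ x in (0:ℝ)..1, f (t * x) * f (t * (1 - x)) *
        cexp (2 * I * t * x * Real.log x + 2 * I * t * (1 - x) * Real.log (1 - x)))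
    (g : ℝ → ℂ) (hg : g = fun t : ℝ => f t * cexp (2 * I * t * Real.log t)) (t : ℝ) (ht : 0 < t) :
    ∫ u in (0:ℝ)..t, g u * g (t - u) = t * g t * cexp (-(I * t)) := by
  have h1 : ∫ u in (0:ℝ)..t, g u * g (t - u) = t * ∫ x in (0:ℝ)..1, g (t * x) * g (t - t * x) := by
    have := intervalIntegral.smul_integral_comp_mul_left (a := 0) (b := 1) (fun u => g u * g (t - u)) t
    rw [mul_zero, mul_one, real_smul] at this
    exact this.symm
  have h2 : ∫ x in (0:ℝ)..1, g (t * x) * g (t - t * x) = cexp (2 * I * t * Real.log t) *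
      ∫ x in (0:ℝ)..1, f (t * x) * f (t * (1 - x)) *
        cexp (2 * I * t * x * Real.log x + 2 * I * t * (1 - x) * Real.log (1 - x)) := by
    rw [← intervalIntegral.integral_const_mul]
    refine intervalIntegral.integral_congr_ae ?_
    have : ∀ᵐ x : ℝ, x ≠ 1 := by simp [ae_iff]
    filter_upwards [this] with x hx1 hx
    rw [uIoc_of_le zero_le_one] at hx
    have hx0 := hx.1
    have hx1' : 0 < 1 - x := by have := lt_of_le_of_ne hx.2 hx1; linarith
    rw [hg]
    simp only
    rw [show t - t * x = t * (1 - x) by ring, Real.log_mul ht.ne' hx0.ne', Real.log_mul ht.ne' hx1'.ne']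
    rw [mul_mul_mul_comm, ← Complex.exp_add, mul_left_comm, ← Complex.exp_add]
    congr 2
    push_cast
    ring
  have h3 := hfix t
  rw [h1, h2]
  have h4 : g t = f t * cexp (2 * I * t * Real.log t) := by rw [hg]
  rw [h4, h3, Complex.exp_neg]
  have := Complex.exp_ne_zero (I * t)
  field_simp

lemma sq_eq (g : ℝ → ℂ) (hgc : Continuous g) (hg1 : ∀ t, ‖g t‖ ≤ 1)
    (hconv : ∀ t : ℝ, 0 < t → ∫ u in (0:ℝ)..t, g u * g (t - u) = t * g t * cexp (-(I * t)))
    (s : ℂ) (hs : 0 < s.re) :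
    (∫ t in Ioi (0:ℝ), g t * cexp (-((s - I) * t))) ^ 2 =
      ∫ t in Ioi (0:ℝ), t * g t * cexp (-(s * t)) := by
  have ig := integrable_g g hgc hg1 (s - I) (by simpa using hs)
  have := integral_posConvolution ig ig (ContinuousLinearMap.mul ℝ ℂ)
  simp only [ContinuousLinearMap.mul_apply'] at this
  rw [sq, ← this]
  refine setIntegral_congr_fun measurableSet_Ioi fun t ht => ?_
  have h : ∀ u : ℝ, g u * cexp (-((s - I) * u)) * (g (t - u) * cexp (-((s - I) * (t - u : ℝ)))) =
      g u * g (t - u) * cexp (-((s - I) * t)) := by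
    intro u
    rw [mul_mul_mul_comm, ← Complex.exp_add]
    congr 2
    push_cast; ring
  simp only [h]
  rw [intervalIntegral.integral_mul_const, hconv t ht, mul_assoc, ← Complex.exp_add]
  congr 2
  ring

lemma inversion_aux (f : ℝ → ℂ) (hf1 : ∀ t, ‖f t‖ ≤ 1) (M : ℝ)
    (hfd : ∀ t, ∃ d : ℂ, ‖d‖ ≤ M ∧ HasDerivAt f d t)
    (hfix : ∀ t : ℝ, f t = cexp (I * t) *
      ∫ x in (0:ℝ)..1, f (t * x) * f (t * (1 - x)) *
        cexp (2 * I * t * x * Real.log x + 2 * I * t * (1 - x) * Real.log (1 - x)))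
    (ψ : ℂ → ℂ) (hψc : Continuous ψ)
    (hψ : ∀ s : ℂ, 0 < s.re → ψ s = ∫ t in Ioi (0:ℝ),
      f t * cexp (2 * I * t * Real.log t) * cexp (-(s * t)))
    (t : ℝ) (ht : 0 < t) (σ : ℝ) (hσ : 0 < σ) :
    f t * cexp (2 * I * t * Real.log t) =
        (1 / (2 * (π : ℂ) * I * t)) *
          ∫ y : ℝ, (ψ ((σ : ℂ) + I * y - I)) ^ 2 * cexp ((t : ℂ) * ((σ : ℂ) + I * y)) * I := by
  have hfc : Continuous f := by
    refine continuous_iff_continuousAt.2 fun t => ?_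
    obtain ⟨d, -, hd⟩ := hfd t
    exact hd.continuousAt
  have hgc := continuous_g f hfc
  have hg1 := norm_g_le f hf1
  have hconv := conv_eq f hfix _ rfl
  obtain ⟨C, hC⟩ := decay f hf1 M hfd σ hσ
  set g : ℝ → ℂ := fun t : ℝ => f t * cexp (2 * I * t * Real.log t) with hg
  let h : ℝ → ℂ := (Ioi (0:ℝ)).indicator (fun t : ℝ => t * g t * cexp (-(σ * t)))
  have hhInt : Integrable h := (integrable_indicator_iff measurableSet_Ioi).2
    (integrable_tg g hgc hg1 σ (by simpa using hσ))
  have hsq : ∀ y : ℝ, ψ (σ + I * y - I) ^ 2 = ∫ t in Ioi (0:ℝ), t * g t * cexp (-((σ + I * y) * t)) := by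
    intro y
    rw [hψ _ (by simpa using hσ)]
    exact sq_eq g hgc hg1 hconv (σ + I * y) (by simpa using hσ)
  have hFh : 𝓕 h = fun w : ℝ => ψ (σ + I * (2 * π * w : ℝ) - I) ^ 2 := by
    ext w
    rw [hsq, Real.fourier_real_eq_integral_exp_smul, ← integral_indicator measurableSet_Ioi]
    congr 1; ext v
    by_cases hv : v ∈ Ioi (0:ℝ)
    · simp only [h, indicator_of_mem hv, smul_eq_mul]
      rw [mul_left_comm, ← Complex.exp_add]
      congr 2
      push_cast; ring
    · simp [h, indicator_of_notMem hv]
  have hψint : Integrable (fun y : ℝ => ψ (σ + I * y - I) ^ 2) := by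
    have hb : Integrable (fun y : ℝ => C ^ 2 * (max 1 (σ⁻¹ ^ 2)) * (1 + (y - 1) ^ 2)⁻¹) :=
      (integrable_inv_one_add_sq.comp_sub_right 1).const_mul _
    refine Integrable.mono' hb (Continuous.aestronglyMeasurable (by fun_prop)) (Eventually.of_forall fun y => ?_)
    have h1 := hC (σ + I * y - I) (by simp)
    rw [← hψ _ (by simpa using hσ), norm_mul] at h1
    have h2 : (‖(σ + I * y - I : ℂ)‖ * ‖ψ (σ + I * y - I)‖) ^ 2 ≤ C ^ 2 :=
      pow_le_pow_left₀ (by positivity) h1 2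
    have h3 : ‖(σ + I * y - I : ℂ)‖ ^ 2 = σ ^ 2 + (y - 1) ^ 2 := by
      rw [← normSq_eq_norm_sq, normSq_apply]; simp; ring
    rw [mul_pow, h3] at h2
    rw [norm_pow]
    have h4 : 1 + (y - 1) ^ 2 ≤ max 1 (σ⁻¹ ^ 2) * (σ ^ 2 + (y - 1) ^ 2) := by
      have e1 : 1 ≤ max 1 (σ⁻¹ ^ 2) * σ ^ 2 := by
        calc (1:ℝ) = σ⁻¹ ^ 2 * σ ^ 2 := by field_simp
          _ ≤ _ := by gcongr; exact le_max_right _ _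
      have e2 : (y - 1) ^ 2 ≤ max 1 (σ⁻¹ ^ 2) * (y - 1) ^ 2 :=
        le_mul_of_one_le_left (sq_nonneg _) (le_max_left _ _)
      linarith
    rw [← div_eq_mul_inv, le_div_iff₀ (by positivity)]
    calc ‖ψ (σ + I * y - I)‖ ^ 2 * (1 + (y - 1) ^ 2)
        ≤ ‖ψ (σ + I * y - I)‖ ^ 2 * (max 1 (σ⁻¹ ^ 2) * (σ ^ 2 + (y - 1) ^ 2)) := by gcongr
      _ = max 1 (σ⁻¹ ^ 2) * ((σ ^ 2 + (y - 1) ^ 2) * ‖ψ (σ + I * y - I)‖ ^ 2) := by ring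
      _ ≤ max 1 (σ⁻¹ ^ 2) * C ^ 2 := by gcongr
      _ = _ := by ring
  have hFint : Integrable (𝓕 h) := by
    rw [hFh]
    exact hψint.comp_mul_left' (by positivity)
  have hcont : ContinuousAt h t := by
    have hc : ContinuousAt (fun t : ℝ => t * g t * cexp (-(σ * t))) t :=
      Continuous.continuousAt (by fun_prop)
    refine hc.congr ?_
    filter_upwards [Ioi_mem_nhds ht] with u hu
    simp only [h, indicator_of_mem (show u ∈ Ioi (0:ℝ) from hu)]
  have hinv := hhInt.fourierInv_fourier_eq hFint hcont
  rw [hFh, Real.fourierInv_eq'] at hinv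
  have hsub := Measure.integral_comp_mul_left
    (fun y : ℝ => cexp (y * t * I) * ψ (σ + I * y - I) ^ 2) (2 * π)
  have hinv2 : (∫ w : ℝ, cexp (((2 * π * w : ℝ) : ℂ) * t * I) * ψ (σ + I * (2 * π * w : ℝ) - I) ^ 2) = h t := by
    rw [← hinv]
    congr 1; ext w
    rw [smul_eq_mul]
    congr 2
    simp; ring
  rw [hinv2] at hsub
  have hht : h t = t * g t * cexp (-(σ * t)) := indicator_of_mem (show t ∈ Ioi (0:ℝ) from ht) _
  have hrhs : (∫ y : ℝ, (ψ ((σ : ℂ) + I * y - I)) ^ 2 * cexp ((t : ℂ) * ((σ : ℂ) + I * y)) * I) =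
      (I * cexp (σ * t)) * ∫ y : ℝ, cexp (y * t * I) * ψ (σ + I * y - I) ^ 2 := by
    rw [← integral_const_mul]
    congr 1; ext y
    rw [show (t:ℂ) * (σ + I * y) = σ * t + y * t * I by ring, Complex.exp_add]
    ring
  rw [hrhs]
  rw [hht, abs_of_pos (by positivity), real_smul, Complex.exp_neg] at hsub
  have hE := Complex.exp_ne_zero (σ * t)
  have ht0 : (t:ℂ) ≠ 0 := by exact_mod_cast ht.ne'
  have hpi : (π:ℂ) ≠ 0 := by exact_mod_cast Real.pi_ne_zero
  push_cast at hsub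
  change g t = _
  generalize (∫ y : ℝ, cexp (y * t * I) * ψ (σ + I * y - I) ^ 2) = J at hsub ⊢
  field_simp at hsub ⊢
  linear_combination hsub

end QS


theorem laplace_inversion_formula
    (μ : MeasureTheory.Measure ℝ) [MeasureTheory.IsProbabilityMeasure μ]
    (hmom : MeasureTheory.Integrable (fun x : ℝ => |x|) μ)
    (f : ℝ → ℂ)
    (hf : ∀ t : ℝ, f t = ∫ x : ℝ, Complex.exp (Complex.I * t * x) ∂μ)
    (hfix : ∀ t : ℝ, f t = Complex.exp (Complex.I * t) *
      ∫ x in (0:ℝ)..1, f (t * x) * f (t * (1 - x)) *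
        Complex.exp (2 * Complex.I * t * x * Real.log x +
          2 * Complex.I * t * (1 - x) * Real.log (1 - x)))
    (ψ : ℂ → ℂ) (hent : Differentiable ℂ ψ)
    (hψ : ∀ s : ℂ, 0 < s.re → ψ s = ∫ t in Set.Ioi (0:ℝ),
      f t * Complex.exp (2 * Complex.I * t * Real.log t) * Complex.exp (-(s * t))) :
    ∀ t : ℝ, 0 < t → ∀ σ : ℝ, 0 < σ →
      f t * Complex.exp (2 * Complex.I * t * Real.log t) =
        (1 / (2 * (Real.pi : ℂ) * Complex.I * t)) *
          ∫ y : ℝ, (ψ ((σ : ℂ) + Complex.I * y - Complex.I)) ^ 2 *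
            Complex.exp ((t : ℂ) * ((σ : ℂ) + Complex.I * y)) * Complex.I := by
  obtain ⟨M, hM⟩ := QS.hasDerivAt_f μ hmom f hf
  intro t ht σ hσ
  exact QS.inversion_aux f (QS.norm_f_le μ f hf) M hM hfix ψ hent.continuous hψ t ht σ hσ
end
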